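/- For every integer n ≥ 3, there exists an entropy of mixing S : Ω_n → ℝ if and only if n = 3. -/

import Mathlib

open Real

noncomputable section

/-- The ambient vector space ℝ³. -/
abbrev V3 : Type := Fin 3 → ℝ

/-- The linear functional on ℝ³ given by the Euclidean inner product with `v`. -/
def dotL (v : V3) : V3 →ₗ[ℝ] ℝ :=
  ∑ i, v i • (LinearMap.proj i : V3 →ₗ[ℝ] ℝ)

/-- The unit effect `u (x, y, z) = z`. -/
def uEff : V3 →ₗ[ℝ] ℝ := LinearMap.proj 2

/-- `e` is an effect on `Ω`: a linear functional with values in `[0,1]` on `Ω`. -/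
def IsEffect (Ω : Set V3) (e : V3 →ₗ[ℝ] ℝ) : Prop :=
  ∀ ω ∈ Ω, 0 ≤ e ω ∧ e ω ≤ 1

/-- The states `ω 0, …, ω (l-1)` are perfectly distinguishable in `Ω`:
there are effects summing to the unit effect with `e i (ω j) = δ_{ij}`. -/
def PerfDist (Ω : Set V3) {l : ℕ} (ω : Fin l → V3) : Prop :=
  ∃ e : Fin l → (V3 →ₗ[ℝ] ℝ),
    (∀ i, IsEffect Ω (e i)) ∧ (∑ i, e i) = uEff ∧
    ∀ i j, e i (ω j) = if i = j then 1 else 0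

/-- `S` is an entropy of mixing on `Ω`: it vanishes on extreme points, and for every
finite family of perfectly distinguishable states and every probability weight,
`S (Σ pᵢ ωᵢ) = Σ pᵢ S(ωᵢ) − Σ pᵢ log pᵢ` (note `Real.log 0 = 0`, so `0 log 0 = 0`). -/
def IsEntropyOfMixing (Ω : Set V3) (S : V3 → ℝ) : Prop :=
  (∀ ω ∈ Set.extremePoints ℝ Ω, S ω = 0) ∧
  ∀ (l : ℕ) (ω : Fin l → V3), (∀ j, ω j ∈ Ω) → PerfDist Ω ω →
    ∀ p : Fin l → ℝ, (∀ i, 0 ≤ p i) → (∑ i, p i) = 1 →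
      S (∑ i, p i • ω i) = (∑ i, p i * S (ω i)) - ∑ i, p i * Real.log (p i)

/-- `r_n = √(1 / cos (π/n))`. -/
def rn (n : ℕ) : ℝ := Real.sqrt (1 / Real.cos (π / n))

/-- The pure states `ω_i^n` of the `n`-gon theory (indices mod `n` via periodicity). -/
def pur (n : ℕ) (i : ℤ) : V3 :=
  ![rn n * Real.cos (2 * π * i / n), rn n * Real.sin (2 * π * i / n), 1]

/-- The `n`-gon state space `Ω_n`: the convex hull of the `n` pure states. -/
def Omega (n : ℕ) : Set V3 :=
  convexHull ℝ {x : V3 | ∃ i : Fin n, x = pur n (i : ℤ)}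

/-- The extreme effect `e_i^n` for even `n`. -/
def effE (n : ℕ) (i : ℤ) : V3 →ₗ[ℝ] ℝ :=
  dotL ((1/2 : ℝ) •
    ![rn n * Real.cos ((2*i-1) * π / n), rn n * Real.sin ((2*i-1) * π / n), 1])

/-- The extreme effect `e_i^n` for odd `n`. -/
def effO (n : ℕ) (i : ℤ) : V3 →ₗ[ℝ] ℝ :=
  dotL ((1/(1 + rn n ^ 2)) •
    ![rn n * Real.cos (2*i*π/n), rn n * Real.sin (2*i*π/n), 1])

/-- The disk state space `Ω_∞ = {(x,y,1) : x² + y² ≤ 1}`. -/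
def OmegaInf : Set V3 := {x : V3 | x 2 = 1 ∧ (x 0)^2 + (x 1)^2 ≤ 1}

/-- The pure states `ω_θ^∞` of the disk theory. -/
def purInf (θ : ℝ) : V3 := ![Real.cos θ, Real.sin θ, 1]

/-- The extreme effects `e_θ^∞` of the disk theory. -/
def effInf (θ : ℝ) : V3 →ₗ[ℝ] ℝ :=
  dotL ((1/2 : ℝ) • ![Real.cos θ, Real.sin θ, 1])

/-- The binary (1-bit Shannon) entropy `H(p) = −p log p − (1−p) log (1−p)`. -/
def H (p : ℝ) : ℝ := -(p * Real.log p) - (1 - p) * Real.log (1 - p)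

/-!
A state written as a mixture of perfectly distinguishable states in two ways has its entropy
computed twice, so every such coincidence is an equation for the entropy. For `n ≥ 4` these
equations are contradictory, and the source of the contradiction depends on the parity of `n`.

If `n` is even, opposite edges form a parallelogram and each point of one is distinguishable from
each point of the other. Mixing them forces the entropy to be affine, hence zero, along an edge. The
midpoint of two suitable distinguishable vertices is also a mixture of a vertex and a point of an
edge, with weights `q / 2` and `1 - q / 2` where `q = cos (2π / n) < 1`, so that its entropy would
be both `log 2` and less.

If `n` is odd, a vertex `O` is distinguishable from each point of the opposite edge `AB`, and
trapezoids with ratio `l = 2 cos (π / n) - 1` determine the entropy along `AB` from either end.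
The two answers must agree, but each has the singularity of `-x log x` at its own end only, unless
`l = 0`, that is, `n = 3`.

The triangle is a simplex, where the Shannon entropy of the barycentric coordinates works because
distinguishable states have disjoint supports.
-/

open Set Filter AffineMap
open scoped Topology

/-! ### The function `-x log x` -/

lemma negMulLog_sum_of_pairwise_mul_eq_zero {ι : Type*} [Fintype ι] {a : ι → ℝ}
    (h : Pairwise fun i j => a i * a j = 0) :
    negMulLog (∑ i, a i) = ∑ i, negMulLog (a i) := by
  classical
  by_cases hzero : ∀ i, a i = 0
  · simp [hzero]
  · obtain ⟨i, hi⟩ := not_forall.1 hzero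
    have hne : ∀ j, j ≠ i → a j = 0 := fun j hj => (mul_eq_zero.1 (h hj)).resolve_right hi
    rw [Fintype.sum_eq_single i hne, Fintype.sum_eq_single i fun j hj => by simp [hne j hj]]

lemma mul_negMulLog_div_add {α β : ℝ} (h : α + β ≠ 0) :
    (α + β) * (negMulLog (α / (α + β)) + negMulLog (β / (α + β))) =
      negMulLog α + negMulLog β - negMulLog (α + β) := by
  have hscale : ∀ x, negMulLog x =
      x / (α + β) * negMulLog (α + β) + (α + β) * negMulLog (x / (α + β)) := fun x => by
    rw [← negMulLog_mul, mul_div_cancel₀ x h]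
  rw [hscale α, hscale β]
  linear_combination -negMulLog (α + β) * (add_div α β (α + β)).symm.trans (div_self h)

lemma negMulLog_add_negMulLog_two_sub_neg {q : ℝ} (hq₀ : 0 ≤ q) (hq₁ : q < 1) :
    negMulLog q + negMulLog (2 - q) < 0 := by
  have h := strictConcaveOn_negMulLog.2 (mem_Ici.2 hq₀) (mem_Ici.2 (by linarith : 0 ≤ 2 - q))
    (by linarith) (one_half_pos (α := ℝ)) one_half_pos (add_halves 1)
  have hmid : (1 / 2 : ℝ) • q + (1 / 2 : ℝ) • (2 - q) = 1 := by simp only [smul_eq_mul]; ring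
  rw [hmid, negMulLog_one, smul_eq_mul, smul_eq_mul] at h
  linarith

lemma not_differentiableWithinAt_negMulLog_zero :
    ¬ DifferentiableWithinAt ℝ negMulLog (Ioi 0) 0 := by
  refine not_differentiableWithinAt_of_deriv_tendsto_atTop_Ioi _ ?_
  have hlim : Tendsto (fun x => -log x + -1) (𝓝[>] 0) atTop :=
    tendsto_atTop_add_const_right _ _ (tendsto_neg_atBot_atTop.comp tendsto_log_nhdsGT_zero)
  refine hlim.congr' ?_
  filter_upwards [self_mem_nhdsWithin] with x hx
  rw [deriv_negMulLog (ne_of_gt hx), sub_eq_add_neg]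

/-! ### Distinguishable pairs and entropies of mixing -/

/-- `x` and `y` are states of `Ω` that are perfectly distinguishable: the two-state case of
`PerfDist`, with membership in `Ω` included so that an entropy of mixing applies directly. -/
def Distinguishable (Ω : Set V3) (x y : V3) : Prop :=
  x ∈ Ω ∧ y ∈ Ω ∧ PerfDist Ω ![x, y]

lemma distinguishable_of_isEffect {Ω : Set V3} (hΩ : ∀ ω ∈ Ω, uEff ω = 1) {e : V3 →ₗ[ℝ] ℝ}
    (he : IsEffect Ω e) {x y : V3} (hx : x ∈ Ω) (hy : y ∈ Ω) (hex : e x = 1) (hey : e y = 0) :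
    Distinguishable Ω x y := by
  refine ⟨hx, hy, ![e, uEff - e], ?_, by simp, ?_⟩
  · refine Fin.forall_fin_two.2 ⟨he, fun ω hω => ?_⟩
    have := he ω hω
    simp only [Matrix.cons_val_one, Matrix.cons_val_fin_one, LinearMap.sub_apply, hΩ ω hω]
    constructor <;> linarith
  · simp [Fin.forall_fin_two, hex, hey, hΩ x hx, hΩ y hy]

namespace IsEntropyOfMixing

variable {Ω : Set V3} {S : V3 → ℝ} {x y z w : V3} {α β γ δ : ℝ}

lemma map_smul_add_smul (hS : IsEntropyOfMixing Ω S) (h : Distinguishable Ω x y)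
    (hα : 0 ≤ α) (hβ : 0 ≤ β) (hαβ : α + β = 1) :
    S (α • x + β • y) = α * S x + β * S y + (negMulLog α + negMulLog β) := by
  have hmix := hS.2 2 ![x, y] (Fin.forall_fin_two.2 ⟨h.1, h.2.1⟩) h.2.2 ![α, β]
    (Fin.forall_fin_two.2 ⟨hα, hβ⟩) (by simpa using hαβ)
  simp only [Fin.sum_univ_two, Matrix.cons_val_zero, Matrix.cons_val_one] at hmix
  rw [hmix, negMulLog, negMulLog]
  ring

lemma mul_map_inv_smul (hS : IsEntropyOfMixing Ω S) (h : Distinguishable Ω x y)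
    (hα : 0 ≤ α) (hβ : 0 ≤ β) (hpos : 0 < α + β) :
    (α + β) * S ((α + β)⁻¹ • (α • x + β • y)) =
      α * S x + β * S y + (negMulLog α + negMulLog β - negMulLog (α + β)) := by
  have hmix := hS.map_smul_add_smul h (div_nonneg hα hpos.le) (div_nonneg hβ hpos.le)
    (by rw [← add_div, div_self hpos.ne'])
  have hpoint : (α + β)⁻¹ • (α • x + β • y) = (α / (α + β)) • x + (β / (α + β)) • y := by
    rw [smul_add, smul_smul, smul_smul, inv_mul_eq_div, inv_mul_eq_div]
  rw [hpoint, hmix, ← mul_negMulLog_div_add hpos.ne']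
  field_simp

lemma mix_eq_mix (hS : IsEntropyOfMixing Ω S)
    (hxy : Distinguishable Ω x y) (hzw : Distinguishable Ω z w)
    (hα : 0 ≤ α) (hβ : 0 ≤ β) (hγ : 0 ≤ γ) (hδ : 0 ≤ δ)
    (hpos : 0 < α + β) (hsum : α + β = γ + δ) (hmix : α • x + β • y = γ • z + δ • w) :
    α * S x + β * S y + (negMulLog α + negMulLog β) =
      γ * S z + δ * S w + (negMulLog γ + negMulLog δ) := by
  have h₁ := hS.mul_map_inv_smul hxy hα hβ hpos
  have h₂ := hS.mul_map_inv_smul hzw hγ hδ (hsum ▸ hpos)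
  rw [hmix, hsum, h₂] at h₁
  linear_combination -h₁

end IsEntropyOfMixing

/-! ### Parallelograms -/

section Parallelogram

variable {Ω : Set V3} {S : V3 → ℝ} {A B A' B' C : V3} {q s : ℝ}

lemma IsEntropyOfMixing.map_lineMap_of_parallelogram (hS : IsEntropyOfMixing Ω S)
    (hpar : A + A' = B + B')
    (hdist : ∀ x ∈ segment ℝ A B, ∀ y ∈ segment ℝ A' B', Distinguishable Ω x y)
    (hs : s ∈ Icc (0 : ℝ) 1) :
    S (lineMap A B s) = (1 - s) * S A + s * S B := by
  have hs' : 0 ≤ 1 - s := sub_nonneg.2 hs.2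
  have hX : lineMap A B s ∈ segment ℝ A B :=
    segment_eq_image_lineMap ℝ A B ▸ mem_image_of_mem _ hs
  have hY : lineMap B' A' s ∈ segment ℝ A' B' :=
    segment_symm ℝ B' A' ▸ segment_eq_image_lineMap ℝ B' A' ▸ mem_image_of_mem _ hs
  have hA' : A' = B + B' - A := by rw [← hpar]; abel
  have hcentre := hS.mix_eq_mix (α := 1) (β := 1) (γ := 1) (δ := 1)
    (hdist _ hX B' (right_mem_segment ℝ A' B')) (hdist A (left_mem_segment ℝ A B) _ hY)
    zero_le_one zero_le_one zero_le_one zero_le_one (by norm_num) rfl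
    (by simp only [lineMap_apply_module, hA']; module)
  have hside := hS.mix_eq_mix (hdist _ hX _ hY)
    (hdist B (right_mem_segment ℝ A B) B' (right_mem_segment ℝ A' B'))
    hs.1 hs' hs.1 hs' (by norm_num) rfl (by simp only [lineMap_apply_module, hA']; module)
  linear_combination hside + (1 - s) * hcentre

lemma not_isEntropyOfMixing_of_parallelogram (hpar : A + A' = B + B')
    (hdist : ∀ x ∈ segment ℝ A B, ∀ y ∈ segment ℝ A' B', Distinguishable Ω x y)
    (hA : A ∈ extremePoints ℝ Ω) (hB : B ∈ extremePoints ℝ Ω) (hA' : A' ∈ extremePoints ℝ Ω)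
    (hC : C ∈ extremePoints ℝ Ω) (hAC : Distinguishable Ω A C)
    (hq₀ : 0 ≤ q) (hq₁ : q < 1) (htrap : C + q • A = B + q • A') :
    ¬ IsEntropyOfMixing Ω S := by
  intro hS
  have hs : (2 - q)⁻¹ ∈ Icc (0 : ℝ) 1 :=
    ⟨inv_nonneg.2 (by linarith), inv_le_one_of_one_le₀ (by linarith)⟩
  have hX : S (lineMap A B (2 - q)⁻¹) = 0 := by
    rw [hS.map_lineMap_of_parallelogram hpar hdist hs, hS.1 A hA, hS.1 B hB, mul_zero, mul_zero,
      add_zero]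
  have hpoint : (1 : ℝ) • A + (1 : ℝ) • C = q • A' + (2 - q) • lineMap A B (2 - q)⁻¹ := by
    have hC' : C = B + q • A' - q • A := by rw [← htrap]; abel
    have hinv : (2 - q) * (2 - q)⁻¹ = 1 := mul_inv_cancel₀ (by linarith)
    rw [lineMap_apply_module, smul_add, smul_smul, smul_smul, mul_sub, hinv, hC']
    module
  have hmix := hS.mix_eq_mix hAC
    (hdist _ (segment_eq_image_lineMap ℝ A B ▸ mem_image_of_mem _ hs) A'
      (left_mem_segment ℝ A' B'))
    zero_le_one zero_le_one (by linarith) hq₀ (by norm_num) (by ring)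
    (hpoint.trans (add_comm _ _))
  rw [hX, hS.1 A hA, hS.1 C hC, hS.1 A' hA', negMulLog_one] at hmix
  linarith [negMulLog_add_negMulLog_two_sub_neg hq₀ hq₁]

end Parallelogram

/-! ### Trapezoids -/

/-- The entropy that mixing forces at the point `(1 - a) B + a A` of an edge `AB` when the pure
states satisfy `A + l O = l B + C`, that is, when `A`, `B`, `O`, `C` span a trapezoid whose
parallel sides have ratio `l`. -/
def trapezoidEntropy (l a : ℝ) : ℝ :=
  negMulLog a + negMulLog (1 - (1 - l) * a) - negMulLog (l * a)

lemma trapezoidEntropy_not_symmetric {l : ℝ} (hl₀ : 0 < l) (hl₁ : l < 1) :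
    ¬ ∀ a ∈ Icc (0 : ℝ) 1, trapezoidEntropy l a = trapezoidEntropy l (1 - a) := by
  intro hsymm
  have htrapected : DifferentiableAt ℝ (fun a => trapezoidEntropy l (1 - a)) 0 := by
    unfold trapezoidEntropy negMulLog
    fun_prop (disch := norm_num [hl₀.ne'])
  have hdiff : DifferentiableWithinAt ℝ (trapezoidEntropy l) (Ioi 0) 0 := by
    refine htrapected.differentiableWithinAt.congr_of_eventuallyEq ?_
      (hsymm 0 (left_mem_Icc.2 zero_le_one))
    filter_upwards [Ioo_mem_nhdsGT zero_lt_one] with a ha using hsymm a (Ioo_subset_Icc_self ha)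
  have hsmooth : DifferentiableAt ℝ
      (fun a => a * negMulLog l - negMulLog (1 - (1 - l) * a)) 0 := by
    unfold negMulLog
    fun_prop (disch := norm_num)
  have hsolve : negMulLog = fun a =>
      (trapezoidEntropy l a + (a * negMulLog l - negMulLog (1 - (1 - l) * a))) / (1 - l) := by
    funext a
    rw [trapezoidEntropy, negMulLog_mul, eq_div_iff (by linarith)]
    ring
  refine not_differentiableWithinAt_negMulLog_zero (hsolve ▸ ?_)
  exact ((hdiff.add hsmooth.differentiableWithinAt).div_const _)

section Trapezoid

variable {Ω : Set V3} {S : V3 → ℝ} {O A B C D : V3} {l a : ℝ}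

lemma IsEntropyOfMixing.map_lineMap_of_trapezoid (hS : IsEntropyOfMixing Ω S)
    (hl : 0 ≤ l) (ha : a ∈ Icc (0 : ℝ) 1) (htrap : A + l • O = l • B + C)
    (hO : O ∈ extremePoints ℝ Ω) (hB : B ∈ extremePoints ℝ Ω) (hC : C ∈ extremePoints ℝ Ω)
    (hOX : Distinguishable Ω O (lineMap B A a)) (hBC : Distinguishable Ω B C) :
    S (lineMap B A a) = trapezoidEntropy l a := by
  have hla : 0 ≤ l * a := mul_nonneg hl ha.1
  have hpoint : (l * a) • O + (1 : ℝ) • lineMap B A a = (1 - (1 - l) * a) • B + a • C := by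
    have hA : A = l • B + C - l • O := by rw [← htrap]; abel
    rw [lineMap_apply_module, hA]
    module
  have hmix := hS.mix_eq_mix hOX hBC hla zero_le_one (by linarith [ha.2]) ha.1
    (by linarith) (by ring) hpoint
  rw [hS.1 O hO, hS.1 B hB, hS.1 C hC, negMulLog_one] at hmix
  rw [trapezoidEntropy]
  linear_combination hmix

lemma not_isEntropyOfMixing_of_trapezoids (hl₀ : 0 < l) (hl₁ : l < 1)
    (hC : A + l • O = l • B + C) (hD : B + l • O = l • A + D)
    (hext : ∀ P ∈ ({O, A, B, C, D} : Set V3), P ∈ extremePoints ℝ Ω)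
    (hO : ∀ x ∈ segment ℝ A B, Distinguishable Ω O x)
    (hAD : Distinguishable Ω A D) (hBC : Distinguishable Ω B C) :
    ¬ IsEntropyOfMixing Ω S := by
  simp only [mem_insert_iff, mem_singleton_iff, forall_eq_or_imp, forall_eq] at hext
  obtain ⟨hOext, hAext, hBext, hCext, hDext⟩ := hext
  intro hS
  refine trapezoidEntropy_not_symmetric hl₀ hl₁ fun a ha => ?_
  have ha' : 1 - a ∈ Icc (0 : ℝ) 1 := ⟨sub_nonneg.2 ha.2, sub_le_self 1 ha.1⟩
  have hX : lineMap B A a ∈ segment ℝ A B :=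
    segment_symm ℝ B A ▸ segment_eq_image_lineMap ℝ B A ▸ mem_image_of_mem _ ha
  have hrev : lineMap A B (1 - a) = lineMap B A a := lineMap_apply_one_sub A B a
  rw [← hS.map_lineMap_of_trapezoid hl₀.le ha hC hOext hBext hCext (hO _ hX) hBC,
    ← hS.map_lineMap_of_trapezoid hl₀.le ha' hD hOext hAext hDext (hrev ▸ hO _ hX) hAD, hrev]

end Trapezoid

/-! ### Simplices -/

section Simplex

variable {ι : Type*}

lemma exists_mem_stdSimplex_of_mem_convexHull_range [Fintype ι] {E : Type*} [AddCommGroup E]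
    [Module ℝ E] {v : ι → E} {x : E} (hx : x ∈ convexHull ℝ (range v)) :
    ∃ w ∈ stdSimplex ℝ ι, ∑ i, w i • v i = x := by
  classical
  have hrange : range v = Fintype.linearCombination ℝ v '' range fun i => Pi.single i 1 := by
    rw [← range_comp]
    congr 1
    ext i
    simp [Fintype.linearCombination_apply_single]
  rw [hrange, ← LinearMap.image_convexHull, convexHull_rangle_single_eq_stdSimplex] at hx
  exact hx

variable [DecidableEq ι] {v : ι → V3} {f : ι → V3 →ₗ[ℝ] ℝ} {x y : V3}

lemma dual_mem_stdSimplex_and_sum_smul_eq [Fintype ι]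
    (hdual : ∀ i j, f i (v j) = if i = j then 1 else 0) (hx : x ∈ convexHull ℝ (range v)) :
    (fun i => f i x) ∈ stdSimplex ℝ ι ∧ ∑ i, f i x • v i = x := by
  obtain ⟨w, hw, rfl⟩ := exists_mem_stdSimplex_of_mem_convexHull_range hx
  have hcoord : ∀ i, f i (∑ j, w j • v j) = w i := fun i => by simp [hdual]
  simpa only [hcoord, and_true] using hw

lemma dual_mul_dual_eq_zero_of_effect [Finite ι]
    (hdual : ∀ i j, f i (v j) = if i = j then 1 else 0)
    (hx : x ∈ convexHull ℝ (range v)) (hy : y ∈ convexHull ℝ (range v)) {e : V3 →ₗ[ℝ] ℝ}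
    (he : IsEffect (convexHull ℝ (range v)) e) (hex : e x = 1) (hey : e y = 0) (k : ι) :
    f k x * f k y = 0 := by
  have := Fintype.ofFinite ι
  obtain ⟨⟨hx₀, hx₁⟩, hxv⟩ := dual_mem_stdSimplex_and_sum_smul_eq hdual hx
  obtain ⟨⟨hy₀, -⟩, hyv⟩ := dual_mem_stdSimplex_and_sum_smul_eq hdual hy
  have hev : ∀ i, 0 ≤ e (v i) ∧ e (v i) ≤ 1 := fun i =>
    he _ (subset_convexHull ℝ _ (mem_range_self i))
  have hsumx : ∑ i, f i x * (1 - e (v i)) = 0 := by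
    have := congrArg e hxv
    simp only [map_sum, map_smul, smul_eq_mul, hex] at this
    simp only [mul_sub, mul_one, Finset.sum_sub_distrib, this, hx₁, sub_self]
  have hsumy : ∑ i, f i y * e (v i) = 0 := by
    simpa only [map_sum, map_smul, smul_eq_mul, hey] using congrArg e hyv
  have hkx : f k x * (1 - e (v k)) = 0 := congrFun ((Fintype.sum_eq_zero_iff_of_nonneg
    fun i => mul_nonneg (hx₀ i) (sub_nonneg.2 (hev i).2)).1 hsumx) k
  have hky : f k y * e (v k) = 0 := congrFun ((Fintype.sum_eq_zero_iff_of_nonneg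
    fun i => mul_nonneg (hy₀ i) (hev i).1).1 hsumy) k
  linear_combination f k y * hkx + f k x * hky

theorem isEntropyOfMixing_convexHull_of_dual [Fintype ι]
    (hdual : ∀ i j, f i (v j) = if i = j then 1 else 0) :
    IsEntropyOfMixing (convexHull ℝ (range v)) fun x => ∑ k, negMulLog (f k x) := by
  constructor
  · intro ω hω
    obtain ⟨i, rfl⟩ := extremePoints_convexHull_subset hω
    refine Finset.sum_eq_zero fun k _ => ?_
    rw [hdual]
    split_ifs <;> simp
  · rintro l ω hω ⟨e, he, -, heω⟩ p - -
    have hsplit : ∀ k, negMulLog (f k (∑ i, p i • ω i)) =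
        ∑ i, (f k (ω i) * negMulLog (p i) + p i * negMulLog (f k (ω i))) := fun k => by
      simp only [map_sum, map_smul, smul_eq_mul, ← negMulLog_mul]
      refine negMulLog_sum_of_pairwise_mul_eq_zero fun i j hij => ?_
      have hdisj := dual_mul_dual_eq_zero_of_effect hdual (hω i) (hω j) (he i)
        (by simp [heω]) (by simp [heω, hij]) k
      linear_combination p i * p j * hdisj
    have hone : ∀ i, ∑ k, f k (ω i) = 1 := fun i =>
      (dual_mem_stdSimplex_and_sum_smul_eq hdual (hω i)).1.2
    calc ∑ k, negMulLog (f k (∑ i, p i • ω i))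
        = ∑ i, ∑ k, (f k (ω i) * negMulLog (p i) + p i * negMulLog (f k (ω i))) := by
          rw [Finset.sum_comm]
          exact Finset.sum_congr rfl fun k _ => hsplit k
      _ = ∑ i, (p i * ∑ k, negMulLog (f k (ω i)) - p i * log (p i)) :=
          Finset.sum_congr rfl fun i _ => by
            rw [Finset.sum_add_distrib, ← Finset.sum_mul, ← Finset.mul_sum, hone, negMulLog]
            ring
      _ = _ := Finset.sum_sub_distrib _ _

end Simplex

/-! ### Convex hulls of points on a sphere -/

lemma subset_extremePoints_convexHull_of_dotProduct_self_eq {ι : Type*} [Fintype ι]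
    {s : Set (ι → ℝ)} {R : ℝ} (hR : 0 < R) (hs : ∀ x ∈ s, x ⬝ᵥ x = R) :
    s ⊆ extremePoints ℝ (convexHull ℝ s) := by
  set L := WithLp.linearEquiv 2 ℝ (ι → ℝ)
  have hsphere : s ⊆ L '' Metric.sphere 0 (√R) := fun x hx =>
    ⟨L.symm x, by
      rw [mem_sphere_zero_iff_norm, EuclideanSpace.norm_eq, ← hs x hx]
      simp [L, dotProduct, sq], L.apply_symm_apply x⟩
  have hball : s ⊆ extremePoints ℝ (L '' Metric.closedBall 0 (√R)) := by
    rw [← image_extremePoints]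
    exact hsphere.trans (image_mono
      (StrictConvexSpace.sphere_subset_extremePoints_closedBall 0 (sqrt_pos.2 hR).ne'))
  have hhull : convexHull ℝ s ⊆ L '' Metric.closedBall 0 (√R) :=
    convexHull_min (hsphere.trans (image_mono Metric.sphere_subset_closedBall))
      ((convex_closedBall _ _).linear_image L.toLinearMap)
  exact fun x hx => inter_extremePoints_subset_extremePoints_of_subset hhull
    ⟨subset_convexHull ℝ s hx, hball hx⟩

/-! ### Polygons -/

section Polygon

variable {n m : ℕ}

lemma pur_periodic (hn : n ≠ 0) : Function.Periodic (pur n) n := fun i => by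
  have hangle : 2 * π * ((i + n : ℤ) : ℝ) / n = 2 * π * i / n + 2 * π := by
    push_cast
    field_simp
  simp only [pur, hangle, cos_add_two_pi, sin_add_two_pi]

lemma pur_eq_of_eq_add (hn : n ≠ 0) {i j : ℤ} (h : i = j + n) : pur n i = pur n j :=
  h ▸ pur_periodic hn j

lemma Omega_eq_convexHull_range (hn : n ≠ 0) : Omega n = convexHull ℝ (range (pur n)) := by
  refine congrArg _ (Subset.antisymm (by rintro _ ⟨i, rfl⟩; exact mem_range_self _) ?_)
  rintro _ ⟨i, rfl⟩
  have hn' : (n : ℤ) ≠ 0 := Int.natCast_ne_zero.2 hn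
  lift i % n to ℕ using Int.emod_nonneg i hn' with k hk
  refine ⟨⟨k, by have := Int.emod_lt_abs i hn'; grind⟩, ?_⟩
  rw [hk, Int.emod_def, mul_comm, ← smul_eq_mul, (pur_periodic hn).sub_zsmul_eq]

lemma pur_mem_Omega (hn : n ≠ 0) (i : ℤ) : pur n i ∈ Omega n :=
  Omega_eq_convexHull_range hn ▸ subset_convexHull ℝ _ (mem_range_self i)

lemma segment_pur_subset_Omega (hn : n ≠ 0) (i j : ℤ) :
    segment ℝ (pur n i) (pur n j) ⊆ Omega n :=
  (convex_convexHull ℝ _).segment_subset (pur_mem_Omega hn i) (pur_mem_Omega hn j)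

lemma uEff_eq_one_of_mem_Omega {ω : V3} (hω : ω ∈ Omega n) : uEff ω = 1 := by
  refine convexHull_min ?_ (convex_hyperplane uEff.isLinear 1) hω
  rintro _ ⟨i, rfl⟩
  simp [uEff, pur]

lemma isEffect_Omega (hn : n ≠ 0) {e : V3 →ₗ[ℝ] ℝ} (he : ∀ j, e (pur n j) ∈ Icc 0 1) :
    IsEffect (Omega n) e := by
  rw [Omega_eq_convexHull_range hn]
  exact convexHull_min (t := e ⁻¹' Icc 0 1) (range_subset_iff.2 he)
    ((convex_Icc 0 1).linear_preimage e)

lemma pur_mem_extremePoints (hn : n ≠ 0) (i : ℤ) : pur n i ∈ extremePoints ℝ (Omega n) := by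
  rw [Omega_eq_convexHull_range hn]
  refine subset_extremePoints_convexHull_of_dotProduct_self_eq (R := rn n ^ 2 + 1)
    (by positivity) ?_ (mem_range_self i)
  rintro _ ⟨j, rfl⟩
  simp only [pur, dotProduct, Fin.sum_univ_three, Matrix.cons_val_zero, Matrix.cons_val_one,
    Matrix.cons_val]
  linear_combination rn n ^ 2 * cos_sq_add_sin_sq (2 * π * j / n)

/-! ### The extreme effects of a polygon -/

lemma cos_pi_div_pos (hn : 3 ≤ n) : 0 < cos (π / n) := by
  have hn' : (2 : ℝ) < n := by exact_mod_cast hn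
  exact cos_pos_of_mem_Ioo ⟨(neg_lt_zero.2 pi_div_two_pos).trans (by positivity),
    div_lt_div_of_pos_left pi_pos two_pos hn'⟩

lemma rn_sq (hn : 3 ≤ n) : rn n ^ 2 = 1 / cos (π / n) :=
  sq_sqrt (one_div_nonneg.2 (cos_pi_div_pos hn).le)

lemma cos_add_natCast_mul_pi_div (hn : n ≠ 0) (k : ℤ) :
    cos ((k + n : ℤ) * (π / n)) = -cos (k * (π / n)) := by
  rw [← cos_add_pi]
  congr 1
  push_cast
  field_simp

lemma sin_mul_pi_div_nonneg {k : ℤ} (hk₀ : 0 ≤ k) (hkn : k ≤ n) : 0 ≤ sin (k * (π / n)) := by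
  have hkn' : (k : ℝ) ≤ n := by exact_mod_cast hkn
  refine sin_nonneg_of_nonneg_of_le_pi (mul_nonneg (Int.cast_nonneg hk₀) (by positivity)) ?_
  rw [mul_div_left_comm]
  exact mul_le_of_le_one_right pi_pos.le (div_le_one_of_le₀ hkn' n.cast_nonneg)

lemma cos_odd_mul_pi_div_le (hn : n ≠ 0) {k : ℤ} (hk : Odd k) :
    cos (k * (π / n)) ≤ cos (π / n) := by
  obtain ⟨j, rfl⟩ := hk
  have hn' : (n : ℤ) ≠ 0 := Int.natCast_ne_zero.2 hn
  have hr₀ : 0 ≤ j % n := Int.emod_nonneg j hn'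
  have hrn : j % n + 1 ≤ n := Int.emod_lt_of_pos j (by omega)
  have hreduce : ((2 * j + 1 : ℤ) : ℝ) * (π / n) =
      (2 * (j % n : ℤ) + 1) * (π / n) + (j / n : ℤ) * (2 * π) := by
    conv_lhs => rw [← Int.emod_add_mul_ediv j n]
    push_cast
    field_simp
    ring
  have hdiff : cos (π / n) - cos ((2 * (j % n : ℤ) + 1) * (π / n)) =
      2 * sin ((j % n + 1 : ℤ) * (π / n)) * sin ((j % n : ℤ) * (π / n)) := by
    rw [two_mul_sin_mul_sin]
    push_cast
    ring_nf
  rw [hreduce, cos_add_int_mul_two_pi, ← sub_nonneg, hdiff]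
  exact mul_nonneg (mul_nonneg two_pos.le (sin_mul_pi_div_nonneg (by omega) hrn))
    (sin_mul_pi_div_nonneg hr₀ (by omega))

lemma neg_cos_pi_div_le_cos (hn : n ≠ 0) {k : ℤ} (hk : Odd (k + n)) :
    -cos (π / n) ≤ cos (k * (π / n)) := by
  rw [← neg_neg (cos (k * (π / n))), ← cos_add_natCast_mul_pi_div hn]
  exact neg_le_neg (cos_odd_mul_pi_div_le hn hk)

lemma effE_pur (hn : 3 ≤ n) (i j : ℤ) :
    effE n i (pur n j) = (1 + cos ((2 * (j - i) + 1 : ℤ) * (π / n)) / cos (π / n)) / 2 := by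
  have hangle : ((2 * (j - i) + 1 : ℤ) : ℝ) * (π / n) =
      2 * π * j / n - (2 * i - 1) * π / n := by
    push_cast
    ring
  rw [hangle, cos_sub, div_eq_mul_one_div _ (cos (π / n)), ← rn_sq hn]
  simp only [effE, dotL, pur, Fin.sum_univ_three, LinearMap.add_apply, LinearMap.smul_apply,
    LinearMap.proj_apply, Pi.smul_apply, smul_eq_mul, Matrix.cons_val_zero, Matrix.cons_val_one,
    Matrix.cons_val]
  ring

lemma effO_pur (hn : 3 ≤ n) (i j : ℤ) :
    effO n i (pur n j) =
      (cos (π / n) + cos ((2 * (j - i) : ℤ) * (π / n))) / (cos (π / n) + 1) := by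
  have hangle : ((2 * (j - i) : ℤ) : ℝ) * (π / n) = 2 * π * j / n - 2 * i * π / n := by
    push_cast
    ring
  have hc := cos_pi_div_pos hn
  have hvalue : effO n i (pur n j) =
      1 / (1 + rn n ^ 2) * (rn n ^ 2 * cos ((2 * (j - i) : ℤ) * (π / n)) + 1) := by
    rw [hangle, cos_sub]
    simp only [effO, dotL, pur, Fin.sum_univ_three, LinearMap.add_apply, LinearMap.smul_apply,
      LinearMap.proj_apply, Pi.smul_apply, smul_eq_mul, Matrix.cons_val_zero,
      Matrix.cons_val_one, Matrix.cons_val]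
    ring
  rw [hvalue, rn_sq hn]
  field_simp
  ring

lemma isEffect_effE (hn : 3 ≤ n) (heven : Even n) (i : ℤ) : IsEffect (Omega n) (effE n i) := by
  refine isEffect_Omega (by omega) fun j => ?_
  have hc := cos_pi_div_pos hn
  have hodd : Odd (2 * (j - i) + 1) := ⟨j - i, rfl⟩
  have hupper := (div_le_one hc).2 (cos_odd_mul_pi_div_le (by omega) hodd)
  have hlower : -1 ≤ cos ((2 * (j - i) + 1 : ℤ) * (π / n)) / cos (π / n) := by
    rw [le_div_iff₀ hc, neg_one_mul]
    exact neg_cos_pi_div_le_cos (by omega) (hodd.add_even (heven.natCast))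
  rw [effE_pur hn]
  constructor <;> linarith

lemma isEffect_effO (hn : 3 ≤ n) (hodd : Odd n) (i : ℤ) : IsEffect (Omega n) (effO n i) := by
  refine isEffect_Omega (by omega) fun j => ?_
  have hc := cos_pi_div_pos hn
  have hlower := neg_cos_pi_div_le_cos (n := n) (by omega)
    ((even_two_mul (j - i)).add_odd (hodd.natCast))
  rw [effO_pur hn]
  exact ⟨div_nonneg (by linarith) (by linarith),
    (div_le_one (by linarith)).2 (by linarith [cos_le_one ((2 * (j - i) : ℤ) * (π / n))])⟩

lemma effE_pur_self (hn : 3 ≤ n) (i : ℤ) : effE n i (pur n i) = 1 := by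
  have hc := cos_pi_div_pos hn
  rw [effE_pur hn, sub_self, mul_zero, zero_add, Int.cast_one, one_mul, div_self hc.ne']
  norm_num

lemma effE_pur_sub_one (hn : 3 ≤ n) (i : ℤ) : effE n i (pur n (i - 1)) = 1 := by
  have hc := cos_pi_div_pos hn
  have hdiff : 2 * (i - 1 - i) + 1 = -1 := by ring
  rw [effE_pur hn, hdiff, Int.cast_neg, Int.cast_one, neg_one_mul, cos_neg, div_self hc.ne']
  norm_num

lemma effO_pur_self (hn : 3 ≤ n) (i : ℤ) : effO n i (pur n i) = 1 := by
  have hc := cos_pi_div_pos hn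
  rw [effO_pur hn, sub_self, mul_zero, Int.cast_zero, zero_mul, cos_zero]
  exact div_self (by linarith)

lemma pur_add_add_pur_sub (n : ℕ) (i k : ℤ) :
    pur n (i + k) + pur n (i - k) =
      (2 * cos (2 * π * k / n)) • pur n i + (2 - 2 * cos (2 * π * k / n)) • ![0, 0, 1] := by
  have hadd : 2 * π * ((i + k : ℤ) : ℝ) / n = 2 * π * i / n + 2 * π * k / n := by
    push_cast; ring
  have hsub : 2 * π * ((i - k : ℤ) : ℝ) / n = 2 * π * i / n - 2 * π * k / n := by
    push_cast; ring
  simp only [pur, hadd, hsub, cos_add, cos_sub, sin_add, sin_sub, Matrix.smul_vec3,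
    Matrix.vec3_add, smul_eq_mul]
  exact Matrix.vec3_eq (by ring) (by ring) (by ring)

/-! ### Polygons with an even number of vertices -/

lemma pur_add_pur_add_half (hm : m ≠ 0) (i : ℤ) :
    pur (2 * m) i + pur (2 * m) (i + m) = (2 : ℝ) • ![0, 0, 1] := by
  have hcos : cos (2 * π * ((m : ℤ) : ℝ) / (2 * m : ℕ)) = -1 := by
    rw [← cos_pi]
    push_cast
    field_simp
  have hperiod : pur (2 * m) (i + m) = pur (2 * m) (i - m) :=
    pur_eq_of_eq_add (by omega) (by omega)
  have h := pur_add_add_pur_sub (2 * m) i m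
  rw [hcos, ← hperiod] at h
  linear_combination (norm := module) (2⁻¹ : ℝ) • h

lemma pur_trapezoid_two_mul (hm : m ≠ 0) (i : ℤ) :
    pur (2 * m) (i - 1 + m) + cos (2 * π / (2 * m : ℕ)) • pur (2 * m) i =
      pur (2 * m) (i + 1) + cos (2 * π / (2 * m : ℕ)) • pur (2 * m) (i + m) := by
  have hchord := pur_add_add_pur_sub (2 * m) i 1
  rw [Int.cast_one, mul_one] at hchord
  linear_combination (norm := module) pur_add_pur_add_half hm (i - 1) - hchord
    - cos (2 * π / (2 * m : ℕ)) • pur_add_pur_add_half hm i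

lemma effE_pur_add_half (hm : 2 ≤ m) (i j : ℤ) :
    effE (2 * m) i (pur (2 * m) (j + m)) = 1 - effE (2 * m) i (pur (2 * m) j) := by
  have hdiff : 2 * (j + m - i) + 1 = 2 * (j - i) + 1 + (2 * m : ℕ) := by push_cast; ring
  rw [effE_pur (by omega), effE_pur (by omega), hdiff, cos_add_natCast_mul_pi_div (by omega)]
  ring

lemma distinguishable_of_opposite_edges (hm : 2 ≤ m) (i : ℤ) {x y : V3}
    (hx : x ∈ segment ℝ (pur (2 * m) i) (pur (2 * m) (i + 1)))
    (hy : y ∈ segment ℝ (pur (2 * m) (i + m)) (pur (2 * m) (i + 1 + m))) :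
    Distinguishable (Omega (2 * m)) x y := by
  have hone₀ : effE (2 * m) (i + 1) (pur (2 * m) i) = 1 := by
    simpa only [add_sub_cancel_right] using effE_pur_sub_one (by omega : 3 ≤ 2 * m) (i + 1)
  have hone₁ := effE_pur_self (by omega : 3 ≤ 2 * m) (i + 1)
  have hlevel := fun c => convex_hyperplane (effE (2 * m) (i + 1)).isLinear c
  refine distinguishable_of_isEffect (fun _ => uEff_eq_one_of_mem_Omega)
    (isEffect_effE (by omega) (even_two_mul m) (i + 1))
    (segment_pur_subset_Omega (by omega) _ _ hx) (segment_pur_subset_Omega (by omega) _ _ hy)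
    ((hlevel 1).segment_subset hone₀ hone₁ hx) ((hlevel 0).segment_subset ?_ ?_ hy)
  · exact (effE_pur_add_half hm _ _).trans (by rw [hone₀, sub_self])
  · exact (effE_pur_add_half hm _ _).trans (by rw [hone₁, sub_self])

theorem not_isEntropyOfMixing_Omega_two_mul (hm : 2 ≤ m) (S : V3 → ℝ) :
    ¬ IsEntropyOfMixing (Omega (2 * m)) S := by
  have hm' : (2 : ℝ) ≤ m := by exact_mod_cast hm
  have hangle : 2 * π / (2 * m : ℕ) = π / m := by push_cast; field_simp
  have hpos : 0 < π / m := by positivity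
  have hle : π / m ≤ π / 2 := div_le_div_of_nonneg_left pi_pos.le two_pos hm'
  have hext := pur_mem_extremePoints (n := 2 * m) (by omega)
  have hAC := distinguishable_of_opposite_edges hm (0 - 1)
    (right_mem_segment ℝ _ _) (left_mem_segment ℝ _ _)
  rw [sub_add_cancel] at hAC
  refine not_isEntropyOfMixing_of_parallelogram (q := cos (2 * π / (2 * m : ℕ)))
    ((pur_add_pur_add_half (by omega) 0).trans (pur_add_pur_add_half (by omega) (0 + 1)).symm)
    (fun x hx y hy => distinguishable_of_opposite_edges hm 0 hx hy)
    (hext _) (hext _) (hext _) (hext _) hAC ?_ ?_ (pur_trapezoid_two_mul (by omega) 0)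
  · rw [hangle]
    exact cos_nonneg_of_neg_pi_div_two_le_of_le (by linarith) hle
  · rw [hangle, ← cos_zero]
    exact cos_lt_cos_of_nonneg_of_le_pi_div_two le_rfl hle hpos

/-! ### Polygons with an odd number of vertices -/

lemma pur_trapezoid_two_mul_add_one (m : ℕ) (i : ℤ) :
    pur (2 * m + 1) (i + m) + (2 * cos (π / (2 * m + 1 : ℕ)) - 1) • pur (2 * m + 1) i =
      (2 * cos (π / (2 * m + 1 : ℕ)) - 1) • pur (2 * m + 1) (i + m + 1)
        + pur (2 * m + 1) (i + 1) := by
  have hcos : cos (2 * π * ((m : ℤ) : ℝ) / (2 * m + 1 : ℕ)) = -cos (π / (2 * m + 1 : ℕ)) := by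
    rw [← cos_pi_sub]
    congr 1
    push_cast
    field_simp
    ring
  have hnear := pur_add_add_pur_sub (2 * m + 1) (i + m + 1) m
  have hfar := pur_add_add_pur_sub (2 * m + 1) i m
  have hwrap : pur (2 * m + 1) (i + m + 1 + m) = pur (2 * m + 1) i :=
    pur_eq_of_eq_add (by omega) (by omega)
  have hwrap' : pur (2 * m + 1) (i + m + 1) = pur (2 * m + 1) (i - m) :=
    pur_eq_of_eq_add (by omega) (by omega)
  have hcancel : i + m + 1 - m = i + 1 := by ring
  rw [hcos, hwrap, hcancel] at hnear
  rw [hcos, ← hwrap'] at hfar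
  linear_combination (norm := module) hfar - hnear

lemma effO_pur_add_half (hm : m ≠ 0) (i : ℤ) :
    effO (2 * m + 1) i (pur (2 * m + 1) (i + m)) = 0 := by
  have hdiff : 2 * (i + m - i) = -1 + (2 * m + 1 : ℕ) := by push_cast; ring
  rw [effO_pur (by omega), hdiff, cos_add_natCast_mul_pi_div (by omega), Int.cast_neg,
    Int.cast_one, neg_one_mul, cos_neg, add_neg_cancel, zero_div]

lemma effO_pur_add_half_add_one (hm : m ≠ 0) (i : ℤ) :
    effO (2 * m + 1) i (pur (2 * m + 1) (i + m + 1)) = 0 := by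
  have hdiff : 2 * (i + m + 1 - i) = 1 + (2 * m + 1 : ℕ) := by push_cast; ring
  rw [effO_pur (by omega), hdiff, cos_add_natCast_mul_pi_div (by omega), Int.cast_one, one_mul,
    add_neg_cancel, zero_div]

lemma distinguishable_of_opposite_edge (hm : m ≠ 0) (i : ℤ) {x : V3}
    (hx : x ∈ segment ℝ (pur (2 * m + 1) (i + m)) (pur (2 * m + 1) (i + m + 1))) :
    Distinguishable (Omega (2 * m + 1)) (pur (2 * m + 1) i) x :=
  distinguishable_of_isEffect (fun _ => uEff_eq_one_of_mem_Omega)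
    (isEffect_effO (by omega) (odd_two_mul_add_one m) i) (pur_mem_Omega (by omega) i)
    (segment_pur_subset_Omega (by omega) _ _ hx) (effO_pur_self (by omega) i)
    ((convex_hyperplane (effO (2 * m + 1) i).isLinear 0).segment_subset
      (effO_pur_add_half hm i) (effO_pur_add_half_add_one hm i) hx)

theorem not_isEntropyOfMixing_Omega_two_mul_add_one (hm : 2 ≤ m) (S : V3 → ℝ) :
    ¬ IsEntropyOfMixing (Omega (2 * m + 1)) S := by
  have hm' : (2 : ℝ) ≤ m := by exact_mod_cast hm
  have hpos : 0 < π / (2 * m + 1 : ℕ) := by positivity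
  have hlt : π / (2 * m + 1 : ℕ) < π / 3 :=
    div_lt_div_of_pos_left pi_pos three_pos (by push_cast; linarith)
  have hl₀ : 1 / 2 < cos (π / (2 * m + 1 : ℕ)) := by
    rw [← cos_pi_div_three]
    exact cos_lt_cos_of_nonneg_of_le_pi hpos.le (by linarith [pi_pos]) hlt
  have hl₁ : cos (π / (2 * m + 1 : ℕ)) < 1 := by
    rw [← cos_zero]
    exact cos_lt_cos_of_nonneg_of_le_pi le_rfl (by linarith [pi_pos]) hpos
  have hext := pur_mem_extremePoints (n := 2 * m + 1) (by omega)
  have hAD := distinguishable_of_opposite_edge (m := m) (by omega) m (left_mem_segment ℝ _ _)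
  have hBC := distinguishable_of_opposite_edge (m := m) (by omega) (m + 1)
    (right_mem_segment ℝ _ _)
  have hD := (add_comm _ _).trans ((pur_trapezoid_two_mul_add_one m m).symm.trans (add_comm _ _))
  have hO : pur (2 * m + 1) (m + m + 1) = pur (2 * m + 1) 0 :=
    pur_eq_of_eq_add (by omega) (by omega)
  have hC : pur (2 * m + 1) (m + 1 + m + 1) = pur (2 * m + 1) 1 :=
    pur_eq_of_eq_add (by omega) (by omega)
  have hOC := pur_trapezoid_two_mul_add_one m 0
  rw [hO] at hD
  rw [hC] at hBC
  rw [zero_add, zero_add] at hOC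
  exact not_isEntropyOfMixing_of_trapezoids (by linarith) (by linarith) hOC hD
    (by simp only [mem_insert_iff, mem_singleton_iff, forall_eq_or_imp, forall_eq, hext, and_self])
    (fun x hx => distinguishable_of_opposite_edge (by omega) 0 (by simpa only [zero_add] using hx))
    hAD hBC

/-! ### The triangle -/

lemma effO_three_pur (i j : Fin 3) :
    effO 3 (i : ℕ) (pur 3 (j : ℕ)) = if i = j then 1 else 0 := by
  have hnext : ∀ k : ℤ, k = (i : ℕ) + 1 ∨ k = (i : ℕ) + 1 + 1 →
      effO 3 (i : ℕ) (pur 3 k) = 0 := by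
    rintro k (rfl | rfl)
    · exact effO_pur_add_half one_ne_zero i
    · exact effO_pur_add_half_add_one one_ne_zero i
  split_ifs with hij
  · rw [hij]
    exact effO_pur_self le_rfl j
  · by_cases hlt : i < j
    · exact hnext j (by omega)
    · rw [← pur_periodic three_ne_zero]
      exact hnext _ (by omega)

theorem isEntropyOfMixing_Omega_three :
    IsEntropyOfMixing (Omega 3) fun x => ∑ i : Fin 3, negMulLog (effO 3 (i : ℕ) x) := by
  have hrange : {x | ∃ i : Fin 3, x = pur 3 ((i : ℕ) : ℤ)} =
      range fun i : Fin 3 => pur 3 (i : ℕ) :=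
    Set.ext fun _ => exists_congr fun _ => eq_comm
  rw [Omega, hrange]
  exact isEntropyOfMixing_convexHull_of_dual effO_three_pur

end Polygon

/-- For every integer `n ≥ 3`, an entropy of mixing on `Ω_n` exists iff `n = 3`. -/
theorem stmt0 (n : ℕ) (hn : 3 ≤ n) :
    (∃ S : V3 → ℝ, IsEntropyOfMixing (Omega n) S) ↔ n = 3 := by
  constructor
  · rintro ⟨S, hS⟩
    by_contra hne
    obtain ⟨m, rfl | rfl⟩ := n.even_or_odd'
    · exact not_isEntropyOfMixing_Omega_two_mul (by omega) S hS
    · exact not_isEntropyOfMixing_Omega_two_mul_add_one (by omega) S hS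
  · rintro rfl
    exact ⟨_, isEntropyOfMixing_Omega_three⟩
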